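/- There exists a unique r ∈ (0,1) with 3·α(r) + 2·β′(r) = 2π, and this r satisfies r⁴ − 10r² − 8r + 9 = 0 (numerically r = c₁ ≈ 0.6375559772). -/

import Mathlib

/-- The angle `α′(r) = arccos(1/(1+r))`. -/
noncomputable def alpha' (r : ℝ) : ℝ := Real.arccos (1 / (1 + r))

/-- The angle `α(r) = π − 2α′(r)`. -/
noncomputable def alphaAngle (r : ℝ) : ℝ := Real.pi - 2 * alpha' r

/-- The angle `β′(r) = arccos(r/(1+r))`. -/
noncomputable def beta' (r : ℝ) : ℝ := Real.arccos (r / (1 + r))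

/-- The angle `β(r) = π − 2β′(r)`. -/
noncomputable def betaAngle (r : ℝ) : ℝ := Real.pi - 2 * beta' r

/-- `F_{ijk}(r) = i·α(r) + j·β′(r) + k·π/3`. -/
noncomputable def F (i j k : ℕ) (r : ℝ) : ℝ :=
  (i : ℝ) * alphaAngle r + (j : ℝ) * beta' r + (k : ℝ) * (Real.pi / 3)

/-!
The angle `α` decreases from `π` to `π/3` and `β′` from `π/2` to `π/3` as `r` runs from `0` to `1`,
so a combination `F i j k` takes each intermediate value exactly once. For the quartic, the
equation says `3α′ = β′ + π/2`; taking cosines and squaring turns `cos² 3α′ = sin² β′` into a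
polynomial equation of degree five in `r`, which has the spurious root `r = 0`.
-/

open Set

section Angles

variable {r : ℝ}

lemma one_div_one_add_mem_Icc (hr : 0 ≤ r) : 1 / (1 + r) ∈ Icc (-1 : ℝ) 1 := by
  have hpos : 0 < 1 + r := by linarith
  constructor
  · rw [le_div_iff₀ hpos]
    linarith
  · rw [div_le_one hpos]
    linarith

lemma self_div_one_add_mem_Icc (hr : -1 / 2 ≤ r) : r / (1 + r) ∈ Icc (-1 : ℝ) 1 := by
  have hpos : 0 < 1 + r := by linarith
  constructor
  · rw [le_div_iff₀ hpos]
    linarith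
  · rw [div_le_one hpos]
    linarith

lemma strictMonoOn_alpha' : StrictMonoOn alpha' (Ici 0) := by
  intro x (hx : 0 ≤ x) y (hy : 0 ≤ y) hxy
  refine Real.strictAntiOn_arccos (one_div_one_add_mem_Icc hy) (one_div_one_add_mem_Icc hx) ?_
  gcongr

lemma strictAntiOn_beta' : StrictAntiOn beta' (Ici (-1 / 2)) := by
  intro x (hx : -1 / 2 ≤ x) y (hy : -1 / 2 ≤ y) hxy
  refine Real.strictAntiOn_arccos (self_div_one_add_mem_Icc hx) (self_div_one_add_mem_Icc hy) ?_
  rw [div_lt_div_iff₀ (by linarith) (by linarith)]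
  linarith

lemma continuousAt_alpha' (hr : 1 + r ≠ 0) : ContinuousAt alpha' r :=
  Real.continuous_arccos.continuousAt.comp (by fun_prop (disch := exact hr))

lemma continuousAt_beta' (hr : 1 + r ≠ 0) : ContinuousAt beta' r :=
  Real.continuous_arccos.continuousAt.comp (by fun_prop (disch := exact hr))

lemma cos_alpha' (hr : 0 ≤ r) : Real.cos (alpha' r) = 1 / (1 + r) :=
  have h := one_div_one_add_mem_Icc hr
  Real.cos_arccos h.1 h.2

lemma cos_beta' (hr : -1 / 2 ≤ r) : Real.cos (beta' r) = r / (1 + r) :=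
  have h := self_div_one_add_mem_Icc hr
  Real.cos_arccos h.1 h.2

lemma cos_three_mul_alpha' (hr : 0 ≤ r) :
    Real.cos (3 * alpha' r) = (1 - 6 * r - 3 * r ^ 2) / (1 + r) ^ 3 := by
  rw [Real.cos_three_mul, cos_alpha' hr]
  field_simp
  ring

lemma sin_beta'_sq (hr : -1 / 2 ≤ r) :
    Real.sin (beta' r) ^ 2 = (1 + 2 * r) / (1 + r) ^ 2 := by
  have hne : 1 + r ≠ 0 := by linarith
  rw [Real.sin_sq, cos_beta' hr]
  field_simp
  ring

end Angles

section LinearCombination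

variable {i j k : ℕ}

lemma F_zero : F i j k 0 = i * Real.pi + j * (Real.pi / 2) + k * (Real.pi / 3) := by
  simp [F, alphaAngle, alpha', beta']

lemma F_one : F i j k 1 = (i + j + k) * (Real.pi / 3) := by
  have hangle : Real.arccos (1 / (1 + 1)) = Real.pi / 3 := by
    rw [one_add_one_eq_two, ← Real.cos_pi_div_three]
    exact Real.arccos_cos (by positivity) (by linarith [Real.pi_pos])
  simp only [F, alphaAngle, alpha', beta', hangle]
  ring

lemma continuousAt_F {r : ℝ} (hr : 1 + r ≠ 0) : ContinuousAt (F i j k) r := by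
  have hα := continuousAt_alpha' hr
  have hβ := continuousAt_beta' hr
  unfold F alphaAngle
  fun_prop

lemma strictAntiOn_F (hij : i ≠ 0 ∨ j ≠ 0) : StrictAntiOn (F i j k) (Ici 0) := by
  intro x (hx : 0 ≤ x) y (hy : 0 ≤ y) hxy
  have hα : alphaAngle y < alphaAngle x := by
    unfold alphaAngle
    linarith [strictMonoOn_alpha' hx hy hxy]
  have hβ : beta' y < beta' x :=
    strictAntiOn_beta' (mem_Ici.2 (by linarith)) (mem_Ici.2 (by linarith)) hxy
  unfold F
  gcongr ?_ + _
  rcases hij with hi | hj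
  · exact add_lt_add_of_lt_of_le (by gcongr) (by gcongr)
  · exact add_lt_add_of_le_of_lt (by gcongr) (by gcongr)

lemma existsUnique_F_eq {c : ℝ} (hc : c ∈ Ioo (F i j k 1) (F i j k 0)) :
    ∃! r, r ∈ Ioo 0 1 ∧ F i j k r = c := by
  have hij : i ≠ 0 ∨ j ≠ 0 := by
    by_contra! h
    simp [F, h.1, h.2] at hc
  have hcont : ContinuousOn (F i j k) (Icc 0 1) := fun r hr =>
    (continuousAt_F (by linarith [hr.1])).continuousWithinAt
  obtain ⟨r, hr, hrc⟩ := intermediate_value_Ioo' zero_le_one hcont hc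
  exact ⟨r, ⟨hr, hrc⟩, fun s hs =>
    (strictAntiOn_F hij).injOn hs.1.1.le hr.1.le (hs.2.trans hrc.symm)⟩

end LinearCombination

lemma F_three_two_zero (r : ℝ) : F 3 2 0 r = 3 * alphaAngle r + 2 * beta' r := by
  simp [F]

lemma two_pi_mem_Ioo_F_three_two_zero : 2 * Real.pi ∈ Ioo (F 3 2 0 1) (F 3 2 0 0) := by
  rw [F_zero, F_one]
  push_cast
  constructor <;> linarith [Real.pi_pos]

lemma quartic_eq_zero_of_F_three_two_zero {r : ℝ} (hr : 0 < r)
    (h : F 3 2 0 r = 2 * Real.pi) : r ^ 4 - 10 * r ^ 2 - 8 * r + 9 = 0 := by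
  have hangle : 3 * alpha' r = beta' r + Real.pi / 2 := by
    rw [F_three_two_zero, alphaAngle] at h
    linarith
  have hcos : Real.cos (3 * alpha' r) = -Real.sin (beta' r) := by
    rw [hangle, Real.cos_add_pi_div_two]
  have hsq : ((1 - 6 * r - 3 * r ^ 2) / (1 + r) ^ 3) ^ 2 = (1 + 2 * r) / (1 + r) ^ 2 := by
    rw [← cos_three_mul_alpha' hr.le, ← sin_beta'_sq (by linarith), hcos, neg_sq]
  have hpoly : (1 - 6 * r - 3 * r ^ 2) ^ 2 = (1 + 2 * r) * (1 + r) ^ 4 := by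
    field_simp at hsq
    linear_combination hsq
  have hfactor : r * (r ^ 4 - 10 * r ^ 2 - 8 * r + 9) = 0 := by
    linear_combination -hpoly / 2
  exact (mul_eq_zero.mp hfactor).resolve_left hr.ne'

/-- There is a unique `r ∈ (0,1)` with `3α(r) + 2β′(r) = 2π`, and it satisfies
`r⁴ − 10r² − 8r + 9 = 0` (this is `c₁ ≈ 0.6375559772`). -/
theorem c1_equation :
    (∃! r : ℝ, r ∈ Set.Ioo (0 : ℝ) 1 ∧
      3 * alphaAngle r + 2 * beta' r = 2 * Real.pi) ∧
    ∀ r ∈ Set.Ioo (0 : ℝ) 1, 3 * alphaAngle r + 2 * beta' r = 2 * Real.pi →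
      r ^ 4 - 10 * r ^ 2 - 8 * r + 9 = 0 := by
  simp only [← F_three_two_zero]
  exact ⟨existsUnique_F_eq two_pi_mem_Ioo_F_three_two_zero,
    fun r hr h => quartic_eq_zero_of_F_three_two_zero hr.1 h⟩
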